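/- arXiv:1510.05013 — 3 statements merged into one kernel-verified Lean document; each statement's English description precedes it below -/
import Mathlib

section
/- Let H be a Hopf algebra and A a partial H-module algebra. The maps Φ(I) = I#H and Ψ(𝓘) = 𝓘 ∩ A give mutually inverse, inclusion-preserving bijections between the set of H-stable ideals of A and the set of ideals of A#H which are H-subcomodules (for the coaction a#h ↦ (a#h₁)⊗h₂), and these bijections preserve sums, finite products and intersections. -/
open TensorProduct

noncomputable section

variable (k : Type*) [Field k]

/-- The "Sweedler sum" `h ↦ Σ f(h₁) * g(h₂)`. -/
def sweedler {H A : Type*} [Ring H] [HopfAlgebra k H]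
    [Ring A] [Algebra k A] (f g : H →ₗ[k] A) : H →ₗ[k] A :=
  (LinearMap.mul' k A) ∘ₗ (TensorProduct.map f g) ∘ₗ Coalgebra.comul

/-- A (left) partial `H`-module algebra structure on a unital algebra `A`:
`1_H · a = a`, `h · (ab) = Σ (h₁·a)(h₂·b)` and `h·(g·b) = Σ (h₁·1)((h₂ g)·b)`. -/
structure PartialModuleAlgebra (H A : Type*) [Ring H] [HopfAlgebra k H]
    [Ring A] [Algebra k A] where
  act : H →ₗ[k] A →ₗ[k] A
  one_act : ∀ a : A, act 1 a = a
  act_mul : ∀ (h : H) (a b : A),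
    act h (a * b) = sweedler k (act.flip a) (act.flip b) h
  act_act : ∀ (h g : H) (b : A),
    act h (act g b) =
      sweedler k (act.flip 1) ((act.flip b) ∘ₗ LinearMap.mulRight k g) h

variable {H A : Type*} [Ring H] [HopfAlgebra k H] [Ring A] [Algebra k A]

/-- A (two-sided) ideal of `A`, encoded as a `k`-submodule closed under multiplication
by elements of `A` on both sides. -/
def IsIdeal (I : Submodule k A) : Prop :=
  ∀ a ∈ I, ∀ b : A, a * b ∈ I ∧ b * a ∈ I

/-- An `H`-stable subspace: `H · I ⊆ I`. -/
def Hstable (ξ : PartialModuleAlgebra k H A) (I : Submodule k A) : Prop :=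
  ∀ (h : H), ∀ x ∈ I, ξ.act h x ∈ I

/-- `(I : H) = {x ∈ I | h · x ∈ I for all h ∈ H}`. -/
def colonH (ξ : PartialModuleAlgebra k H A) (I : Submodule k A) : Submodule k A :=
  I ⊓ ⨅ h : H, Submodule.comap (ξ.act h) I

/-- `μ` realizes the smash-product multiplication on `A ⊗ H`:
`(a # h)(b # g) = Σ a(h₁·b) # h₂ g`. -/
def SmashMulFormula (ξ : PartialModuleAlgebra k H A)
    (μ : (A ⊗[k] H) →ₗ[k] (A ⊗[k] H) →ₗ[k] (A ⊗[k] H)) : Prop :=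
  ∀ (a b : A) (h g : H),
    μ (a ⊗ₜ[k] h) (b ⊗ₜ[k] g) =
      (TensorProduct.map ((LinearMap.mulLeft k a) ∘ₗ ξ.act.flip b)
        (LinearMap.mulRight k g)) (Coalgebra.comul h)

variable (H A) in
/-- The element `1_A ⊗ 1_H`. -/
def smashE : A ⊗[k] H := (1 : A) ⊗ₜ[k] (1 : H)

/-- The partial smash product `A # H = (A ⊗ H)(1_A # 1_H)` as a subspace of `A ⊗ H`. -/
def smashS (μ : (A ⊗[k] H) →ₗ[k] (A ⊗[k] H) →ₗ[k] (A ⊗[k] H)) : Submodule k (A ⊗[k] H) :=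
  LinearMap.range (μ.flip (smashE k H A))

/-- The canonical embedding `A → A # H`, `a ↦ a # 1_H`. -/
def smashF (μ : (A ⊗[k] H) →ₗ[k] (A ⊗[k] H) →ₗ[k] (A ⊗[k] H)) : A →ₗ[k] A ⊗[k] H :=
  (μ.flip (smashE k H A)) ∘ₗ ((TensorProduct.mk k A H).flip 1)

/-- An ideal of the partial smash product `A # H` (in the corner model). -/
def IsSmashIdeal (μ : (A ⊗[k] H) →ₗ[k] (A ⊗[k] H) →ₗ[k] (A ⊗[k] H))
    (I : Submodule k (A ⊗[k] H)) : Prop :=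
  I ≤ smashS k μ ∧ ∀ x ∈ smashS k μ, ∀ i ∈ I, μ x i ∈ I ∧ μ i x ∈ I

/-- The comodule structure map of `A ⊗ H`, `a ⊗ h ↦ (a ⊗ h₁) ⊗ h₂`. -/
def smashDelta : A ⊗[k] H →ₗ[k] (A ⊗[k] H) ⊗[k] H :=
  (TensorProduct.assoc k A H H).symm.toLinearMap ∘ₗ
    (TensorProduct.map LinearMap.id Coalgebra.comul)

/-- A subspace of `A ⊗ H` which is an `H`-subcomodule. -/
def IsSubcomodule (I : Submodule k (A ⊗[k] H)) : Prop :=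
  ∀ i ∈ I, smashDelta k i ∈
    LinearMap.range (TensorProduct.map I.subtype (LinearMap.id : H →ₗ[k] H))

/-- `Φ(I) = I # H`, the span of the elements `x # h` with `x ∈ I`. -/
def smashPhi (μ : (A ⊗[k] H) →ₗ[k] (A ⊗[k] H) →ₗ[k] (A ⊗[k] H)) (I : Submodule k A) :
    Submodule k (A ⊗[k] H) :=
  Submodule.span k {z | ∃ x ∈ I, ∃ h : H, z = μ (x ⊗ₜ[k] h) (smashE k H A)}

/-- `Ψ(𝓘) = 𝓘 ∩ A` (via the embedding `a ↦ a # 1_H`). -/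
def smashPsi (μ : (A ⊗[k] H) →ₗ[k] (A ⊗[k] H) →ₗ[k] (A ⊗[k] H))
    (J : Submodule k (A ⊗[k] H)) : Submodule k A :=
  Submodule.comap (smashF k μ) J

/-- The product of two ideals of `A`. -/
def idealProd (I J : Submodule k A) : Submodule k A :=
  Submodule.span k {z | ∃ a ∈ I, ∃ b ∈ J, z = a * b}

/-- The product of two ideals of `A # H`. -/
def smashProd (μ : (A ⊗[k] H) →ₗ[k] (A ⊗[k] H) →ₗ[k] (A ⊗[k] H))
    (I J : Submodule k (A ⊗[k] H)) : Submodule k (A ⊗[k] H) :=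
  Submodule.span k {z | ∃ i ∈ I, ∃ j ∈ J, z = μ i j}

/-! Right multiplication by `1 # 1` is the composite `A ⊗ H → (A ⊗ H) ⊗ H → A ⊗ H` of the coaction
with `T ⊗ H`, where `T (a ⊗ h) = a (h · 1)`. It is therefore colinear, and it projects `I ⊗ H` onto
`I # H = (I ⊗ H) ∩ (A # H)` as soon as `I` is an ideal; this gives everything about `Φ`, the case of
intersections because tensoring with the free module `H` commutes with them.

Conversely, let `J` be an ideal and a subcomodule. The antipode recovers `T`:
`T (a # h) # 1 = Σ (a # h₁) (1 # S h₂)`, so `T` maps `J` into `J ∩ A`. Hence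
`j = j (1 # 1) = (T ⊗ H) (ρ j)` lies in `(J ∩ A) ⊗ H` for `j ∈ J`, which gives `J = (J ∩ A) # H`,
and `h · a = T ((1 # h) (a # 1))` shows that `J ∩ A` is `H`-stable. -/

section TensorRight

variable {R M M' : Type*} [CommSemiring R] [AddCommMonoid M] [Module R M]
  [AddCommMonoid M'] [Module R M']
variable (N : Type*) [AddCommMonoid N] [Module R N]

/-- The image of `I ⊗ N` in `M ⊗ N`, for a submodule `I` of `M`. -/
def tensorRight (I : Submodule R M) : Submodule R (M ⊗[R] N) :=
  Submodule.map₂ (TensorProduct.mk R M N) I ⊤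

variable {N}

theorem tmul_mem_tensorRight {I : Submodule R M} {x : M} (hx : x ∈ I) (n : N) :
    x ⊗ₜ[R] n ∈ tensorRight N I :=
  Submodule.apply_mem_map₂ _ hx Submodule.mem_top

theorem tensorRight_le {I : Submodule R M} {L : Submodule R (M ⊗[R] N)} :
    tensorRight N I ≤ L ↔ ∀ x ∈ I, ∀ n : N, x ⊗ₜ[R] n ∈ L := by
  simp [tensorRight, Submodule.map₂_le]

theorem tensorRight_top : tensorRight N (⊤ : Submodule R M) = ⊤ :=
  TensorProduct.map₂_mk_top_top_eq_top R M N

theorem tensorRight_iSup {ι : Sort*} (I : ι → Submodule R M) :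
    tensorRight N (⨆ i, I i) = ⨆ i, tensorRight N (I i) :=
  Submodule.map₂_iSup_left _ _ _

theorem range_map_subtype_id (I : Submodule R M) :
    LinearMap.range (TensorProduct.map I.subtype (LinearMap.id : N →ₗ[R] N)) = tensorRight N I := by
  rw [TensorProduct.range_map, Submodule.range_subtype, LinearMap.range_id, tensorRight]

theorem rTensor_mem_tensorRight {I : Submodule R M} {I' : Submodule R M'} {f : M →ₗ[R] M'}
    (hf : ∀ x ∈ I, f x ∈ I') {z : M ⊗[R] N} (hz : z ∈ tensorRight N I) :
    f.rTensor N z ∈ tensorRight N I' := by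
  have hle : tensorRight N I ≤ (tensorRight N I').comap (f.rTensor N) :=
    tensorRight_le.2 fun x hx n => tmul_mem_tensorRight (hf x hx) n
  exact hle hz

theorem rid_lTensor_mem_of_mem_tensorRight {I : Submodule R M} (φ : N →ₗ[R] R) {z : M ⊗[R] N}
    (hz : z ∈ tensorRight N I) : TensorProduct.rid R M (φ.lTensor M z) ∈ I := by
  have hle : tensorRight N I ≤
      I.comap ((TensorProduct.rid R M).toLinearMap ∘ₗ φ.lTensor M) :=
    tensorRight_le.2 fun x hx n => by simpa using I.smul_mem _ hx
  exact hle hz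

theorem mem_tensorRight_iff_forall_rid_lTensor_mem [Module.Free R N] {I : Submodule R M}
    {z : M ⊗[R] N} :
    z ∈ tensorRight N I ↔ ∀ φ : N →ₗ[R] R, TensorProduct.rid R M (φ.lTensor M z) ∈ I := by
  refine ⟨fun hz φ => rid_lTensor_mem_of_mem_tensorRight φ hz, fun hz => ?_⟩
  let b := Module.Free.chooseBasis R N
  rw [← (equivFinsuppOfBasisRight b).symm_apply_apply z, equivFinsuppOfBasisRight_symm_apply]
  refine Submodule.sum_mem _ fun i _ => tmul_mem_tensorRight ?_ _
  rw [equivFinsuppOfBasisRight_apply]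
  exact hz _

theorem tensorRight_iInf [Module.Free R N] {ι : Sort*} (I : ι → Submodule R M) :
    tensorRight N (⨅ i, I i) = ⨅ i, tensorRight N (I i) := by
  ext z
  simp only [Submodule.mem_iInf, mem_tensorRight_iff_forall_rid_lTensor_mem]
  exact forall_comm

end TensorRight

section Convolution

variable {k}

theorem sweedler_apply (f g : H →ₗ[k] A) {ι : Type*} {h : H} (r : Coalgebra.Repr k h ι) :
    sweedler k f g h = ∑ i ∈ r.index, f (r.left i) * g (r.right i) :=
  r.convMul_apply (WithConv.toConv f) (WithConv.toConv g)

theorem sweedler_assoc (f g l : H →ₗ[k] A) :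
    sweedler k (sweedler k f g) l = sweedler k f (sweedler k g l) :=
  congrArg WithConv.ofConv
    (mul_assoc (WithConv.toConv f) (WithConv.toConv g) (WithConv.toConv l))

theorem sweedler_counit (f : H →ₗ[k] A) :
    sweedler k f (Algebra.linearMap k A ∘ₗ Coalgebra.counit) = f :=
  congrArg WithConv.ofConv (mul_one (WithConv.toConv f))

theorem sweedler_id_antipode :
    sweedler k LinearMap.id (HopfAlgebra.antipode k) =
      Algebra.linearMap k H ∘ₗ Coalgebra.counit :=
  congrArg WithConv.ofConv LinearMap.id_mul_antipode

theorem algHom_comp_sweedler {B : Type*} [Ring B] [Algebra k B] (φ : A →ₐ[k] B)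
    (f g : H →ₗ[k] A) :
    φ.toLinearMap ∘ₗ sweedler k f g = sweedler k (φ.toLinearMap ∘ₗ f) (φ.toLinearMap ∘ₗ g) :=
  LinearMap.algHom_comp_convMul_distrib φ (WithConv.toConv f) (WithConv.toConv g)

end Convolution

section CofreeLift

variable {R C B M : Type*} [CommSemiring R] [AddCommMonoid C] [Module R C]
  [Coalgebra R C] [Semiring B] [Algebra R B] [AddCommMonoid M] [Module R M]

/-- The map `c ↦ Σ f(c₁) ⊗ c₂`, which is the colinear map `C → M ⊗ C` corresponding to `f` under the
universal property of the cofree comodule `M ⊗ C`. -/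
def cofreeLift (f : C →ₗ[R] M) : C →ₗ[R] M ⊗[R] C :=
  f.rTensor C ∘ₗ Coalgebra.comul

theorem cofreeLift_apply (f : C →ₗ[R] M) {ι : Type*} {c : C} (r : Coalgebra.Repr R c ι) :
    cofreeLift f c = ∑ i ∈ r.index, f (r.left i) ⊗ₜ[R] r.right i := by
  simp [cofreeLift, ← r.eq]

theorem cofreeLift_mulLeft_comp {C : Type*} [Semiring C] [Bialgebra R C] (b : B) (f : C →ₗ[R] B)
    (c : C) : cofreeLift (LinearMap.mulLeft R b ∘ₗ f) c = (b ⊗ₜ[R] 1) * cofreeLift f c := by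
  simp [cofreeLift_apply _ (Coalgebra.Repr.arbitrary R c), Finset.mul_sum]

theorem cofreeLift_apply_mul {C : Type*} [Semiring C] [Bialgebra R C] (f : C →ₗ[R] B) (c : C)
    {ι : Type*} {d : C} (r : Coalgebra.Repr R d ι) :
    cofreeLift f (c * d) =
      ∑ i ∈ r.index, cofreeLift (f ∘ₗ LinearMap.mulRight R (r.left i)) c *
        ((1 : B) ⊗ₜ[R] r.right i) := by
  simp only [cofreeLift_apply _ (Coalgebra.Repr.arbitrary R c)]
  simp [cofreeLift, Bialgebra.comul_mul, ← r.eq, ← (Coalgebra.Repr.arbitrary R c).eq,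
    Finset.mul_sum, Finset.sum_mul]

variable {k}

theorem cofreeLift_eq_sweedler (f : H →ₗ[k] A) :
    cofreeLift f = sweedler k (Algebra.TensorProduct.includeLeft.toLinearMap ∘ₗ f)
      Algebra.TensorProduct.includeRight.toLinearMap := by
  ext h
  simp [cofreeLift_apply f (Coalgebra.Repr.arbitrary k h),
    sweedler_apply _ _ (Coalgebra.Repr.arbitrary k h)]

theorem cofreeLift_sweedler (f g : H →ₗ[k] A) :
    cofreeLift (sweedler k f g) =
      sweedler k (Algebra.TensorProduct.includeLeft.toLinearMap ∘ₗ f) (cofreeLift g) := by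
  simp only [cofreeLift_eq_sweedler, algHom_comp_sweedler, sweedler_assoc]

theorem sweedler_cofreeLift_antipode (f : H →ₗ[k] A) :
    sweedler k (cofreeLift f)
        (Algebra.TensorProduct.includeRight.toLinearMap ∘ₗ HopfAlgebra.antipode k) =
      Algebra.TensorProduct.includeLeft.toLinearMap ∘ₗ f := by
  have inverse : sweedler k Algebra.TensorProduct.includeRight.toLinearMap
        (Algebra.TensorProduct.includeRight.toLinearMap ∘ₗ HopfAlgebra.antipode k) =
      Algebra.linearMap k (A ⊗[k] H) ∘ₗ Coalgebra.counit := by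
    rw [← LinearMap.comp_id Algebra.TensorProduct.includeRight.toLinearMap, LinearMap.comp_assoc,
      LinearMap.id_comp, ← algHom_comp_sweedler, sweedler_id_antipode]
    exact LinearMap.ext fun h => Algebra.TensorProduct.includeRight.commutes (Coalgebra.counit h)
  rw [cofreeLift_eq_sweedler, sweedler_assoc, inverse, sweedler_counit]

end CofreeLift

section Coaction

variable {k}

theorem smashDelta_tmul (a : A) (h : H) :
    smashDelta k (a ⊗ₜ[k] h) = (TensorProduct.mk k A H a).rTensor H (Coalgebra.comul h) := by
  simp [smashDelta, ← (Coalgebra.Repr.arbitrary k h).eq, tmul_sum]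

theorem smashDelta_cofreeLift (f : H →ₗ[k] A) (h : H) :
    smashDelta k (cofreeLift f h) = (cofreeLift f).rTensor H (Coalgebra.comul h) := by
  have naturality : smashDelta k ∘ₗ f.rTensor H =
      (f.rTensor H).rTensor H ∘ₗ (TensorProduct.assoc k H H H).symm.toLinearMap ∘ₗ
        Coalgebra.comul.lTensor H := by
    ext x y
    simp [smashDelta, ← (Coalgebra.Repr.arbitrary k y).eq, tmul_sum]
  calc smashDelta k (cofreeLift f h)
      = (f.rTensor H).rTensor H ((TensorProduct.assoc k H H H).symm
          (Coalgebra.comul.lTensor H (Coalgebra.comul h))) :=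
        LinearMap.congr_fun naturality (Coalgebra.comul h)
    _ = (cofreeLift f).rTensor H (Coalgebra.comul h) := by
        rw [Coalgebra.coassoc_symm_apply, ← LinearMap.rTensor_comp_apply, cofreeLift]

theorem smashDelta_rTensor_smashDelta (f : A ⊗[k] H →ₗ[k] A) (z : A ⊗[k] H) :
    smashDelta k (f.rTensor H (smashDelta k z)) =
      (f.rTensor H ∘ₗ smashDelta k).rTensor H (smashDelta k z) := by
  induction z with
  | zero => simp
  | add x y hx hy => simp only [map_add, hx, hy]
  | tmul a h =>
    have lift_comp : (f.rTensor H ∘ₗ smashDelta k) ∘ₗ TensorProduct.mk k A H a =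
        cofreeLift (f ∘ₗ TensorProduct.mk k A H a) := by
      ext g
      simp [cofreeLift, smashDelta_tmul, LinearMap.rTensor_comp]
    rw [smashDelta_tmul, ← LinearMap.rTensor_comp_apply, ← LinearMap.rTensor_comp_apply, lift_comp]
    exact smashDelta_cofreeLift _ h

theorem isSubcomodule_iff {J : Submodule k (A ⊗[k] H)} :
    IsSubcomodule k J ↔ ∀ z ∈ J, smashDelta k z ∈ tensorRight H J := by
  rw [IsSubcomodule, range_map_subtype_id]

theorem smashDelta_mem_tensorRight {I : Submodule k A} {z : A ⊗[k] H}
    (hz : z ∈ tensorRight H I) : smashDelta k z ∈ tensorRight H (tensorRight H I) := by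
  have hle : tensorRight H I ≤ (tensorRight H (tensorRight H I)).comap (smashDelta k) := by
    refine tensorRight_le.2 fun x hx h => ?_
    rw [Submodule.mem_comap, smashDelta_tmul]
    refine rTensor_mem_tensorRight (I := ⊤) (fun g _ => tmul_mem_tensorRight hx g) ?_
    exact tensorRight_top.ge Submodule.mem_top
  exact hle hz

end Coaction

section SmashProduct

variable {k}
variable {ξ : PartialModuleAlgebra k H A} {μ : (A ⊗[k] H) →ₗ[k] (A ⊗[k] H) →ₗ[k] (A ⊗[k] H)}

theorem PartialModuleAlgebra.flip_act_mul_act (ξ : PartialModuleAlgebra k H A) (g : H) (b c : A) :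
    ξ.act.flip (b * ξ.act g c) =
      sweedler k (ξ.act.flip b) (ξ.act.flip c ∘ₗ LinearMap.mulRight k g) := by
  have flip_mul (x y : A) : ξ.act.flip (x * y) = sweedler k (ξ.act.flip x) (ξ.act.flip y) :=
    LinearMap.ext fun h => ξ.act_mul h x y
  have flip_act : ξ.act.flip (ξ.act g c) =
      sweedler k (ξ.act.flip 1) (ξ.act.flip c ∘ₗ LinearMap.mulRight k g) :=
    LinearMap.ext fun h => ξ.act_act h g c
  rw [flip_mul, flip_act, ← sweedler_assoc, ← flip_mul, mul_one]

namespace SmashMulFormula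

theorem tmul_tmul (hμ : SmashMulFormula k ξ μ) (a b : A) (h g : H) :
    μ (a ⊗ₜ[k] h) (b ⊗ₜ[k] g) =
      (a ⊗ₜ[k] 1) * cofreeLift (ξ.act.flip b) h * (1 ⊗ₜ[k] g) := by
  rw [hμ, cofreeLift_apply _ (Coalgebra.Repr.arbitrary k h), ← (Coalgebra.Repr.arbitrary k h).eq]
  simp [Finset.mul_sum, Finset.sum_mul]

theorem tmul_tmul_eq_sum (hμ : SmashMulFormula k ξ μ) (a b : A) (g : H) {ι : Type*} {h : H}
    (r : Coalgebra.Repr k h ι) :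
    μ (a ⊗ₜ[k] h) (b ⊗ₜ[k] g) =
      ∑ i ∈ r.index, (a * ξ.act (r.left i) b) ⊗ₜ[k] (r.right i * g) := by
  simp [hμ.tmul_tmul, cofreeLift_apply _ r, Finset.mul_sum, Finset.sum_mul]

theorem tmul_one_mul_tmul (hμ : SmashMulFormula k ξ μ) (a b : A) (h : H) :
    μ (a ⊗ₜ[k] 1) (b ⊗ₜ[k] h) = (a * b) ⊗ₜ[k] h := by
  simp [hμ a b, ξ.one_act, Algebra.TensorProduct.one_def]

theorem tmul_one_mul_smashE (hμ : SmashMulFormula k ξ μ) (a : A) :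
    μ (a ⊗ₜ[k] 1) (smashE k H A) = a ⊗ₜ[k] 1 := by
  rw [smashE, hμ.tmul_one_mul_tmul, mul_one]

theorem smashE_mul (hμ : SmashMulFormula k ξ μ) (z : A ⊗[k] H) : μ (smashE k H A) z = z := by
  induction z with
  | zero => simp
  | add x y hx hy => rw [map_add, hx, hy]
  | tmul a h => rw [smashE, hμ.tmul_one_mul_tmul, one_mul]

theorem cofreeLift_mul_tmul (hμ : SmashMulFormula k ξ μ) (a c : A) (f : H →ₗ[k] A) (h l : H)
    {ι : Type*} {g : H} (r : Coalgebra.Repr k g ι) :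
    μ ((a ⊗ₜ[k] 1) * cofreeLift f h * (1 ⊗ₜ[k] g)) (c ⊗ₜ[k] l) =
      ∑ i ∈ r.index, (a ⊗ₜ[k] 1) *
        cofreeLift (sweedler k f (ξ.act.flip c ∘ₗ LinearMap.mulRight k (r.left i))) h *
          (1 ⊗ₜ[k] (r.right i * l)) := by
  rw [cofreeLift_apply f (Coalgebra.Repr.arbitrary k h)]
  simp only [cofreeLift_sweedler, sweedler_apply _ _ (Coalgebra.Repr.arbitrary k h),
    Finset.mul_sum, Finset.sum_mul, Algebra.TensorProduct.tmul_mul_tmul, one_mul, mul_one,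
    map_sum, LinearMap.sum_apply, hμ.tmul_tmul, cofreeLift_apply_mul _ _ r]
  rw [Finset.sum_comm]
  simp only [mul_assoc, Algebra.TensorProduct.tmul_mul_tmul, one_mul]
  simp [← mul_assoc]

theorem assoc (hμ : SmashMulFormula k ξ μ) (x y z : A ⊗[k] H) :
    μ (μ x y) z = μ x (μ y z) := by
  induction x with
  | zero => simp
  | add x x' hx hx' => simp only [map_add, LinearMap.add_apply, hx, hx']
  | tmul a h =>
  induction y with
  | zero => simp
  | add y y' hy hy' => simp only [map_add, LinearMap.add_apply, hy, hy']
  | tmul b g =>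
  induction z with
  | zero => simp
  | add z z' hz hz' => simp only [map_add, hz, hz']
  | tmul c l =>
  let r := Coalgebra.Repr.arbitrary k g
  rw [hμ.tmul_tmul a b, hμ.cofreeLift_mul_tmul a c _ h l r, hμ.tmul_tmul_eq_sum b c l r, map_sum]
  simp only [hμ.tmul_tmul a, ξ.flip_act_mul_act]

theorem mem_smashS_iff (hμ : SmashMulFormula k ξ μ) {z : A ⊗[k] H} :
    z ∈ smashS k μ ↔ μ z (smashE k H A) = z := by
  refine ⟨?_, fun hz => ⟨z, hz⟩⟩
  rintro ⟨w, rfl⟩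
  rw [LinearMap.flip_apply, hμ.assoc, hμ.smashE_mul]

theorem tmul_one_mem_smashS (hμ : SmashMulFormula k ξ μ) (a : A) :
    a ⊗ₜ[k] 1 ∈ smashS k μ :=
  hμ.mem_smashS_iff.2 (hμ.tmul_one_mul_smashE a)

theorem mul_mem_tensorRight (hμ : SmashMulFormula k ξ μ) {I I' K : Submodule k A}
    (hK : ∀ a ∈ I, ∀ b ∈ I', ∀ h, a * ξ.act h b ∈ K) {z w : A ⊗[k] H}
    (hz : z ∈ tensorRight H I) (hw : w ∈ tensorRight H I') : μ z w ∈ tensorRight H K := by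
  have hle : tensorRight H I ≤ (tensorRight H K).comap (μ.flip w) := by
    refine tensorRight_le.2 fun a ha h => ?_
    have hle' : tensorRight H I' ≤ (tensorRight H K).comap (μ (a ⊗ₜ h)) := by
      refine tensorRight_le.2 fun b hb g => ?_
      rw [Submodule.mem_comap, hμ.tmul_tmul_eq_sum a b g (Coalgebra.Repr.arbitrary k h)]
      exact Submodule.sum_mem _ fun i _ => tmul_mem_tensorRight (hK a ha b hb _) _
    exact hle' hw
  exact hle hz

theorem mul_mem_tensorRight_of_left (hμ : SmashMulFormula k ξ μ) {I : Submodule k A}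
    (hI : IsIdeal k I) {z : A ⊗[k] H} (hz : z ∈ tensorRight H I) (w : A ⊗[k] H) :
    μ z w ∈ tensorRight H I :=
  hμ.mul_mem_tensorRight (I' := ⊤) (fun a ha _ _ _ => (hI a ha _).1) hz
    (tensorRight_top.ge Submodule.mem_top)

theorem mul_mem_tensorRight_of_right (hμ : SmashMulFormula k ξ μ) {I : Submodule k A}
    (hI : IsIdeal k I) (hs : Hstable k ξ I) (z : A ⊗[k] H) {w : A ⊗[k] H}
    (hw : w ∈ tensorRight H I) : μ z w ∈ tensorRight H I :=
  hμ.mul_mem_tensorRight (I := ⊤) (fun a _ b hb h => (hI _ (hs h b hb) a).2)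
    (tensorRight_top.ge Submodule.mem_top) hw

end SmashMulFormula

namespace PartialModuleAlgebra

/-- The map `A ⊗ H → A`, `a ⊗ h ↦ a (h · 1)`. -/
def evalOne (ξ : PartialModuleAlgebra k H A) : A ⊗[k] H →ₗ[k] A :=
  LinearMap.mul' k A ∘ₗ (ξ.act.flip 1).lTensor A

theorem evalOne_comp_mk (ξ : PartialModuleAlgebra k H A) (a : A) :
    ξ.evalOne ∘ₗ TensorProduct.mk k A H a = LinearMap.mulLeft k a ∘ₗ ξ.act.flip 1 := by
  ext h
  simp [evalOne]

end PartialModuleAlgebra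

namespace SmashMulFormula

theorem evalOne_tmul_mul_tmul_one (hμ : SmashMulFormula k ξ μ) (h : H) (a : A) :
    ξ.evalOne (μ (1 ⊗ₜ[k] h) (a ⊗ₜ[k] 1)) = ξ.act h a := by
  rw [← mul_one a, ξ.act_mul, sweedler_apply _ _ (Coalgebra.Repr.arbitrary k h),
    hμ.tmul_tmul_eq_sum _ _ _ (Coalgebra.Repr.arbitrary k h)]
  simp [PartialModuleAlgebra.evalOne]

theorem mul_smashE (hμ : SmashMulFormula k ξ μ) (z : A ⊗[k] H) :
    μ z (smashE k H A) = ξ.evalOne.rTensor H (smashDelta k z) := by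
  induction z with
  | zero => simp
  | add x y hx hy => simp only [map_add, LinearMap.add_apply, hx, hy]
  | tmul a h =>
    rw [smashDelta_tmul, ← LinearMap.rTensor_comp_apply, ξ.evalOne_comp_mk, smashE, hμ.tmul_tmul,
      ← cofreeLift_mulLeft_comp, ← Algebra.TensorProduct.one_def, mul_one]
    rfl

theorem smashDelta_mul_smashE (hμ : SmashMulFormula k ξ μ) (z : A ⊗[k] H) :
    smashDelta k (μ z (smashE k H A)) = (μ.flip (smashE k H A)).rTensor H (smashDelta k z) := by
  have flip_eq : μ.flip (smashE k H A) = ξ.evalOne.rTensor H ∘ₗ smashDelta k :=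
    LinearMap.ext hμ.mul_smashE
  rw [hμ.mul_smashE, flip_eq, smashDelta_rTensor_smashDelta]

end SmashMulFormula

/-- The map `(A ⊗ H) ⊗ H → A ⊗ H`, `z ⊗ h ↦ z (1 # S h)`. -/
def mulAntipode (μ : (A ⊗[k] H) →ₗ[k] (A ⊗[k] H) →ₗ[k] (A ⊗[k] H)) :
    (A ⊗[k] H) ⊗[k] H →ₗ[k] A ⊗[k] H :=
  TensorProduct.lift
    (μ.compl₂ (μ.flip (smashE k H A) ∘ₗ TensorProduct.mk k A H 1 ∘ₗ HopfAlgebra.antipode k))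

theorem SmashMulFormula.sum_tmul_mul_antipode (hμ : SmashMulFormula k ξ μ) (a : A) {ι : Type*}
    {h : H} (r : Coalgebra.Repr k h ι) :
    ∑ i ∈ r.index, μ (a ⊗ₜ[k] r.left i) (1 ⊗ₜ[k] HopfAlgebra.antipode k (r.right i)) =
      (a * ξ.act h 1) ⊗ₜ[k] 1 := by
  have cancel := LinearMap.congr_fun (sweedler_cofreeLift_antipode (ξ.act.flip 1)) h
  rw [sweedler_apply _ _ r] at cancel
  simp only [hμ.tmul_tmul, mul_assoc, ← Finset.mul_sum]
  simpa using congrArg ((a ⊗ₜ[k] (1 : H)) * ·) cancel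

theorem SmashMulFormula.mulAntipode_smashDelta (hμ : SmashMulFormula k ξ μ) (z : A ⊗[k] H) :
    mulAntipode μ (smashDelta k z) = ξ.evalOne z ⊗ₜ[k] 1 := by
  induction z with
  | zero => simp
  | add x y hx hy => simp only [map_add, hx, hy, add_tmul]
  | tmul a h =>
    let r := Coalgebra.Repr.arbitrary k h
    calc mulAntipode μ (smashDelta k (a ⊗ₜ[k] h))
        = μ (∑ i ∈ r.index, μ (a ⊗ₜ[k] r.left i) (1 ⊗ₜ[k] HopfAlgebra.antipode k (r.right i)))
            (smashE k H A) := by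
          simp [mulAntipode, smashDelta_tmul, ← r.eq, hμ.assoc]
      _ = ξ.evalOne (a ⊗ₜ[k] h) ⊗ₜ[k] 1 := by
          rw [hμ.sum_tmul_mul_antipode, hμ.tmul_one_mul_smashE]
          rfl

end SmashProduct

section Phi

variable {k}
variable {ξ : PartialModuleAlgebra k H A} {μ : (A ⊗[k] H) →ₗ[k] (A ⊗[k] H) →ₗ[k] (A ⊗[k] H)}

theorem smashPhi_eq_map (μ : (A ⊗[k] H) →ₗ[k] (A ⊗[k] H) →ₗ[k] (A ⊗[k] H)) (I : Submodule k A) :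
    smashPhi k μ I = (tensorRight H I).map (μ.flip (smashE k H A)) := by
  rw [tensorRight, Submodule.map_map₂, Submodule.map₂_eq_span_image2, smashPhi]
  congr 1
  ext z
  simp [Set.mem_image2, eq_comm]

theorem smashPhi_iSup (μ : (A ⊗[k] H) →ₗ[k] (A ⊗[k] H) →ₗ[k] (A ⊗[k] H)) {ι : Sort*}
    (F : ι → Submodule k A) : smashPhi k μ (⨆ i, F i) = ⨆ i, smashPhi k μ (F i) := by
  simp only [smashPhi_eq_map, tensorRight_iSup, Submodule.map_iSup]

theorem smashPhi_mono {I I' : Submodule k A} (h : I ≤ I') : smashPhi k μ I ≤ smashPhi k μ I' :=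
  Submodule.span_mono fun _ ⟨x, hx, g, hz⟩ => ⟨x, h hx, g, hz⟩

theorem mul_smashE_mem_smashPhi {I : Submodule k A} {z : A ⊗[k] H} (hz : z ∈ tensorRight H I) :
    μ z (smashE k H A) ∈ smashPhi k μ I := by
  rw [smashPhi_eq_map]
  exact Submodule.mem_map_of_mem hz

namespace SmashMulFormula

theorem smashPhi_eq_inf (hμ : SmashMulFormula k ξ μ) {I : Submodule k A} (hI : IsIdeal k I) :
    smashPhi k μ I = tensorRight H I ⊓ smashS k μ := by
  apply le_antisymm
  · rw [smashPhi_eq_map]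
    rintro _ ⟨z, hz, rfl⟩
    exact ⟨hμ.mul_mem_tensorRight_of_left hI hz _, z, rfl⟩
  · rintro z ⟨hz, hzS⟩
    rw [← hμ.mem_smashS_iff.1 hzS]
    exact mul_smashE_mem_smashPhi hz

theorem isSmashIdeal_smashPhi (hμ : SmashMulFormula k ξ μ) {I : Submodule k A}
    (hI : IsIdeal k I) (hs : Hstable k ξ I) : IsSmashIdeal k μ (smashPhi k μ I) := by
  have mul_mem_smashS (x : A ⊗[k] H) {y : A ⊗[k] H} (hy : y ∈ smashS k μ) :
      μ x y ∈ smashS k μ := by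
    rw [hμ.mem_smashS_iff] at hy ⊢
    rw [hμ.assoc, hy]
  rw [hμ.smashPhi_eq_inf hI]
  refine ⟨inf_le_right, fun x hx i hi => ⟨?_, ?_⟩⟩
  · exact ⟨hμ.mul_mem_tensorRight_of_right hI hs x hi.1, mul_mem_smashS x hi.2⟩
  · exact ⟨hμ.mul_mem_tensorRight_of_left hI hi.1 x, mul_mem_smashS i hx⟩

theorem isSubcomodule_smashPhi (hμ : SmashMulFormula k ξ μ) (I : Submodule k A) :
    IsSubcomodule k (smashPhi k μ I) := by
  rw [isSubcomodule_iff]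
  intro y hy
  rw [smashPhi_eq_map] at hy
  obtain ⟨z, hz, rfl⟩ := hy
  rw [LinearMap.flip_apply, hμ.smashDelta_mul_smashE]
  exact rTensor_mem_tensorRight (fun _ hx => mul_smashE_mem_smashPhi hx)
    (smashDelta_mem_tensorRight hz)

theorem mem_smashPsi_iff (hμ : SmashMulFormula k ξ μ) {J : Submodule k (A ⊗[k] H)} {a : A} :
    a ∈ smashPsi k μ J ↔ a ⊗ₜ[k] 1 ∈ J := by
  simp [smashPsi, smashF, hμ.tmul_one_mul_smashE]

theorem smashPsi_smashPhi (hμ : SmashMulFormula k ξ μ) {I : Submodule k A} (hI : IsIdeal k I) :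
    smashPsi k μ (smashPhi k μ I) = I := by
  ext a
  rw [hμ.mem_smashPsi_iff, hμ.smashPhi_eq_inf hI]
  refine ⟨fun ha => ?_, fun ha => ⟨tmul_mem_tensorRight ha 1, hμ.tmul_one_mem_smashS a⟩⟩
  simpa using rid_lTensor_mem_of_mem_tensorRight Coalgebra.counit ha.1

theorem smashPhi_le_smashPhi_iff (hμ : SmashMulFormula k ξ μ) {I I' : Submodule k A}
    (hI : IsIdeal k I) (hI' : IsIdeal k I') : smashPhi k μ I ≤ smashPhi k μ I' ↔ I ≤ I' := by
  refine ⟨fun h => ?_, smashPhi_mono⟩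
  rw [← hμ.smashPsi_smashPhi hI, ← hμ.smashPsi_smashPhi hI']
  exact Submodule.comap_mono h

theorem smashPhi_iInf (hμ : SmashMulFormula k ξ μ) {ι : Sort*} [Nonempty ι]
    {F : ι → Submodule k A} (hF : ∀ i, IsIdeal k (F i)) :
    smashPhi k μ (⨅ i, F i) = ⨅ i, smashPhi k μ (F i) := by
  have isIdeal_iInf : IsIdeal k (⨅ i, F i) := by
    simp only [IsIdeal, Submodule.mem_iInf]
    exact fun a ha b => ⟨fun i => (hF i a (ha i) b).1, fun i => (hF i a (ha i) b).2⟩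
  simp only [hμ.smashPhi_eq_inf isIdeal_iInf, hμ.smashPhi_eq_inf (hF _), tensorRight_iInf, iInf_inf]

theorem smashPhi_idealProd (hμ : SmashMulFormula k ξ μ) {I I' : Submodule k A}
    (hI : IsIdeal k I) (hI' : IsIdeal k I') (hs' : Hstable k ξ I') :
    smashPhi k μ (idealProd k I I') = smashProd k μ (smashPhi k μ I) (smashPhi k μ I') := by
  apply le_antisymm
  · rw [smashPhi_eq_map, Submodule.map_le_iff_le_comap, tensorRight_le]
    intro x hx h
    have hle : idealProd k I I' ≤ (smashProd k μ (smashPhi k μ I) (smashPhi k μ I')).comap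
        (μ.flip (smashE k H A) ∘ₗ (TensorProduct.mk k A H).flip h) := by
      refine Submodule.span_le.2 ?_
      rintro _ ⟨a, ha, b, hb, rfl⟩
      refine Submodule.subset_span ⟨a ⊗ₜ 1, ?_, μ (b ⊗ₜ h) (smashE k H A),
        mul_smashE_mem_smashPhi (tmul_mem_tensorRight hb h), ?_⟩
      · exact hμ.mem_smashPsi_iff.1 ((hμ.smashPsi_smashPhi hI).ge ha)
      · rw [← hμ.assoc, hμ.tmul_one_mul_tmul]
        rfl
    exact hle hx
  · refine Submodule.span_le.2 ?_
    rintro _ ⟨i, hi, j, hj, rfl⟩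
    rw [hμ.smashPhi_eq_inf hI] at hi
    rw [hμ.smashPhi_eq_inf hI'] at hj
    rw [← hμ.mem_smashS_iff.1 hj.2, ← hμ.assoc]
    exact mul_smashE_mem_smashPhi (hμ.mul_mem_tensorRight (K := idealProd k I I')
      (fun a ha b hb h => Submodule.subset_span ⟨a, ha, _, hs' h b hb, rfl⟩) hi.1 hj.1)

end SmashMulFormula

end Phi

section Psi

variable {k}
variable {ξ : PartialModuleAlgebra k H A} {μ : (A ⊗[k] H) →ₗ[k] (A ⊗[k] H) →ₗ[k] (A ⊗[k] H)}

namespace IsSmashIdeal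

variable {J : Submodule k (A ⊗[k] H)}

theorem mul_mem_left (hJ : IsSmashIdeal k μ J) (hμ : SmashMulFormula k ξ μ) (x : A ⊗[k] H)
    {j : A ⊗[k] H} (hj : j ∈ J) : μ x j ∈ J := by
  have hxe := (hJ.2 (μ x (smashE k H A)) ⟨x, rfl⟩ j hj).1
  rwa [hμ.assoc, hμ.smashE_mul] at hxe

theorem isIdeal_smashPsi (hJ : IsSmashIdeal k μ J) (hμ : SmashMulFormula k ξ μ) :
    IsIdeal k (smashPsi k μ J) := by
  intro a ha b
  rw [hμ.mem_smashPsi_iff] at ha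
  simp only [hμ.mem_smashPsi_iff, ← hμ.tmul_one_mul_tmul]
  exact (hJ.2 _ (hμ.tmul_one_mem_smashS b) _ ha).symm

theorem evalOne_mem_smashPsi (hJ : IsSmashIdeal k μ J) (hμ : SmashMulFormula k ξ μ)
    (hc : IsSubcomodule k J) {z : A ⊗[k] H} (hz : z ∈ J) : ξ.evalOne z ∈ smashPsi k μ J := by
  have hle : tensorRight H J ≤ J.comap (mulAntipode μ) :=
    tensorRight_le.2 fun j hj h => (hJ.2 _ ⟨1 ⊗ₜ HopfAlgebra.antipode k h, rfl⟩ j hj).2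
  rw [hμ.mem_smashPsi_iff, ← hμ.mulAntipode_smashDelta]
  exact hle (isSubcomodule_iff.1 hc z hz)

theorem hstable_smashPsi (hJ : IsSmashIdeal k μ J) (hμ : SmashMulFormula k ξ μ)
    (hc : IsSubcomodule k J) : Hstable k ξ (smashPsi k μ J) := by
  intro h a ha
  rw [← hμ.evalOne_tmul_mul_tmul_one]
  exact hJ.evalOne_mem_smashPsi hμ hc (hJ.mul_mem_left hμ _ (hμ.mem_smashPsi_iff.1 ha))

theorem smashPhi_smashPsi (hJ : IsSmashIdeal k μ J) (hμ : SmashMulFormula k ξ μ)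
    (hc : IsSubcomodule k J) : smashPhi k μ (smashPsi k μ J) = J := by
  apply le_antisymm
  · refine Submodule.span_le.2 ?_
    rintro _ ⟨a, ha, h, rfl⟩
    have mul_mem := (hJ.2 _ ⟨1 ⊗ₜ[k] h, rfl⟩ _ (hμ.mem_smashPsi_iff.1 ha)).2
    rwa [LinearMap.flip_apply, ← hμ.assoc, hμ.tmul_one_mul_tmul, mul_one] at mul_mem
  · intro j hj
    rw [hμ.smashPhi_eq_inf (hJ.isIdeal_smashPsi hμ)]
    refine ⟨?_, hJ.1 hj⟩
    rw [← hμ.mem_smashS_iff.1 (hJ.1 hj), hμ.mul_smashE]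
    exact rTensor_mem_tensorRight (fun _ hz => hJ.evalOne_mem_smashPsi hμ hc hz)
      (isSubcomodule_iff.1 hc j hj)

end IsSmashIdeal

end Psi

/-- The one-to-one correspondence `I ↦ I # H`, `𝓘 ↦ 𝓘 ∩ A` between `H`-stable ideals of `A`
and ideals of `A # H` which are `H`-subcomodules; the two maps are mutually inverse and
preserve inclusions, sums, (finite) products and intersections. -/
theorem smash_ideal_correspondence (ξ : PartialModuleAlgebra k H A)
    (μ : (A ⊗[k] H) →ₗ[k] (A ⊗[k] H) →ₗ[k] (A ⊗[k] H)) (hμ : SmashMulFormula k ξ μ) :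
    -- `Φ` is well defined and `Ψ ∘ Φ = id`
    (∀ I : Submodule k A, IsIdeal k I → Hstable k ξ I →
      IsSmashIdeal k μ (smashPhi k μ I) ∧ IsSubcomodule k (smashPhi k μ I) ∧
      smashPsi k μ (smashPhi k μ I) = I) ∧
    -- `Ψ` is well defined and `Φ ∘ Ψ = id`
    (∀ J : Submodule k (A ⊗[k] H), IsSmashIdeal k μ J → IsSubcomodule k J →
      IsIdeal k (smashPsi k μ J) ∧ Hstable k ξ (smashPsi k μ J) ∧
      smashPhi k μ (smashPsi k μ J) = J) ∧
    -- `Φ` preserves (and reflects) inclusions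
    (∀ I I' : Submodule k A, IsIdeal k I → Hstable k ξ I → IsIdeal k I' → Hstable k ξ I' →
      (I ≤ I' ↔ smashPhi k μ I ≤ smashPhi k μ I')) ∧
    -- `Φ` preserves sums
    (∀ (ι : Type) (F : ι → Submodule k A), (∀ i, IsIdeal k (F i) ∧ Hstable k ξ (F i)) →
      smashPhi k μ (⨆ i, F i) = ⨆ i, smashPhi k μ (F i)) ∧
    -- `Φ` preserves (finite) products
    (∀ I I' : Submodule k A, IsIdeal k I → Hstable k ξ I → IsIdeal k I' → Hstable k ξ I' →
      smashPhi k μ (idealProd k I I') = smashProd k μ (smashPhi k μ I) (smashPhi k μ I')) ∧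
    -- `Φ` preserves intersections
    (∀ (ι : Type) [Nonempty ι] (F : ι → Submodule k A),
      (∀ i, IsIdeal k (F i) ∧ Hstable k ξ (F i)) →
      smashPhi k μ (⨅ i, F i) = ⨅ i, smashPhi k μ (F i)) := by
  refine ⟨fun I hI hs => ?_, fun J hJ hc => ?_, fun I I' hI _ hI' _ => ?_, fun ι F _ => ?_,
    fun I I' hI _ hI' hs' => ?_, fun ι _ F hF => ?_⟩
  · exact ⟨hμ.isSmashIdeal_smashPhi hI hs, hμ.isSubcomodule_smashPhi I, hμ.smashPsi_smashPhi hI⟩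
  · exact ⟨hJ.isIdeal_smashPsi hμ, hJ.hstable_smashPsi hμ hc, hJ.smashPhi_smashPsi hμ hc⟩
  · exact (hμ.smashPhi_le_smashPhi_iff hI hI').symm
  · exact smashPhi_iSup μ F
  · exact hμ.smashPhi_idealProd hI hI' hs'
  · exact hμ.smashPhi_iInf fun i => (hF i).1
end
end

section
/- Let A be a partial H-module algebra and 𝔭 ⊊ A an H-stable ideal. Then 𝔭 is H-prime if and only if for all a, b ∈ A, (H·a)A(H·b) ⊆ 𝔭 implies a ∈ 𝔭 or b ∈ 𝔭. -/
/-!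
In contrast to a global action, the span `H · a` need not be `H`-stable, but the partial action
axiom `h · (g · a) = Σ (h₁ · 1) ((h₂ g) · a)` makes `A (H · a)`, and hence `(a) = A (H · a) A`,
`H`-stable. Since `(a)(b) = A (H · a) A (H · b) A`, the inclusion `(H · a) A (H · b) ⊆ 𝔭` says
exactly that `(a)(b) ⊆ 𝔭`, so the elementwise condition is `H`-primeness tested on the ideals
`(a)` and `(b)`.
-/

open TensorProduct

noncomputable section

variable (k : Type*) [Field k]

variable {H A : Type*} [Ring H] [HopfAlgebra k H] [Ring A] [Algebra k A]

/-- An `H`-prime ideal: a proper `H`-stable ideal `𝔭` such that for all `H`-stable ideals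
`I, J`, `IJ ⊆ 𝔭` implies `I ⊆ 𝔭` or `J ⊆ 𝔭`. -/
def IsHPrime (ξ : PartialModuleAlgebra k H A) (p : Submodule k A) : Prop :=
  IsIdeal k p ∧ Hstable k ξ p ∧ p ≠ ⊤ ∧
    ∀ I J : Submodule k A, IsIdeal k I → Hstable k ξ I → IsIdeal k J → Hstable k ξ J →
      idealProd k I J ≤ p → I ≤ p ∨ J ≤ p

/-- An `H`-semiprime ideal: a proper `H`-stable ideal `𝔰` such that `I² ⊆ 𝔰` implies
`I ⊆ 𝔰` for every `H`-stable ideal `I`. -/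
def IsHSemiprime (ξ : PartialModuleAlgebra k H A) (s : Submodule k A) : Prop :=
  IsIdeal k s ∧ Hstable k ξ s ∧ s ≠ ⊤ ∧
    ∀ I : Submodule k A, IsIdeal k I → Hstable k ξ I → idealProd k I I ≤ s → I ≤ s

/-- The subspace `A(H·x)A(H·y)`, spanned by the products `a (h·x) b (g·y)`. -/
def spanAxAy (ξ : PartialModuleAlgebra k H A) (x y : A) : Submodule k A :=
  Submodule.span k {w | ∃ (a : A) (h : H) (b : A) (g : H), w = a * ξ.act h x * b * ξ.act g y}

/-- An `Hm`-system: a nonempty `M ⊆ A` such that `A(H·x)A(H·y) ∩ M ≠ ∅` for `x, y ∈ M`. -/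
def HmSystem (ξ : PartialModuleAlgebra k H A) (M : Set A) : Prop :=
  M.Nonempty ∧ ∀ x ∈ M, ∀ y ∈ M, ∃ z ∈ M, z ∈ spanAxAy k ξ x y

/-- An `Hn`-system: a nonempty `N ⊆ A` such that `A(H·x)A(H·x) ∩ N ≠ ∅` for `x ∈ N`. -/
def HnSystem (ξ : PartialModuleAlgebra k H A) (N : Set A) : Prop :=
  N.Nonempty ∧ ∀ x ∈ N, ∃ z ∈ N, z ∈ spanAxAy k ξ x x

/-- The `H`-radical `√_H(I)` of an `H`-stable ideal `I`:
`{x | every Hm-system containing x meets I}`. -/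
def Hradical (ξ : PartialModuleAlgebra k H A) (I : Submodule k A) : Set A :=
  {x : A | ∀ M : Set A, HmSystem k ξ M → x ∈ M → (M ∩ (I : Set A)).Nonempty}

section TwoSidedSpan

variable {R B : Type*} [CommSemiring R] [Semiring B] [Algebra R B]

/-- The two-sided ideal `B M B` generated by a submodule `M` of an `R`-algebra `B`, encoded as an
`R`-submodule to match `IsIdeal`. -/
def twoSidedSpan (M : Submodule R B) : Submodule R B :=
  ⊤ * M * ⊤

theorem le_twoSidedSpan (M : Submodule R B) : M ≤ twoSidedSpan M :=
  calc
    M = 1 * M * 1 := by rw [one_mul, mul_one]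
    _ ≤ ⊤ * M * ⊤ := mul_le_mul' (mul_le_mul_left le_top M) le_top

theorem twoSidedSpan_mul_twoSidedSpan (M N : Submodule R B) :
    twoSidedSpan M * twoSidedSpan N = twoSidedSpan (M * ⊤ * N) := by
  have top_mul_top : (⊤ : Submodule R B) * ⊤ = ⊤ :=
    top_le_iff.1 (le_mul_of_one_le_right' le_top)
  calc
    ⊤ * M * ⊤ * (⊤ * N * ⊤) = ⊤ * (M * (⊤ * ⊤) * N) * ⊤ := by simp only [mul_assoc]
    _ = ⊤ * (M * ⊤ * N) * ⊤ := by rw [top_mul_top]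

end TwoSidedSpan

section HPrime

variable {k}

theorem idealProd_eq_mul (I J : Submodule k A) : idealProd k I J = I * J := by
  refine le_antisymm (Submodule.span_le.2 ?_)
    (Submodule.mul_le.2 fun a ha b hb => Submodule.subset_span ⟨a, ha, b, hb, rfl⟩)
  rintro _ ⟨a, ha, b, hb, rfl⟩
  exact Submodule.mul_mem_mul ha hb

theorem isIdeal_iff_mul_top_le_and_top_mul_le {I : Submodule k A} :
    IsIdeal k I ↔ I * ⊤ ≤ I ∧ ⊤ * I ≤ I := by
  simp only [IsIdeal, Submodule.mul_le, Submodule.mem_top, true_imp_iff]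
  exact ⟨fun h => ⟨fun a ha b => (h a ha b).1, fun b a ha => (h a ha b).2⟩,
    fun h a ha b => ⟨h.1 a ha b, h.2 b a ha⟩⟩

theorem isIdeal_twoSidedSpan (M : Submodule k A) : IsIdeal k (twoSidedSpan M) := by
  rw [isIdeal_iff_mul_top_le_and_top_mul_le]
  constructor
  · calc
      ⊤ * M * ⊤ * ⊤ = ⊤ * M * (⊤ * ⊤) := mul_assoc _ _ _
      _ ≤ ⊤ * M * ⊤ := mul_le_mul_right le_top _
  · calc
      ⊤ * (⊤ * M * ⊤) = ⊤ * ⊤ * M * ⊤ := by simp only [mul_assoc]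
      _ ≤ ⊤ * M * ⊤ := mul_le_mul_left (mul_le_mul_left le_top _) _

theorem twoSidedSpan_le_iff {M I : Submodule k A} (hI : IsIdeal k I) :
    twoSidedSpan M ≤ I ↔ M ≤ I := by
  obtain ⟨mul_top_le, top_mul_le⟩ := isIdeal_iff_mul_top_le_and_top_mul_le.1 hI
  refine ⟨(le_twoSidedSpan M).trans, fun hM => ?_⟩
  calc
    ⊤ * M * ⊤ ≤ ⊤ * I * ⊤ := mul_le_mul_left (mul_le_mul_right hM _) _
    _ ≤ I * ⊤ := mul_le_mul_left top_mul_le _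
    _ ≤ I := mul_top_le

theorem sweedler_mem_mul {f g : H →ₗ[k] A} {M N : Submodule k A}
    (hf : ∀ h, f h ∈ M) (hg : ∀ h, g h ∈ N) (h : H) : sweedler k f g h ∈ M * N := by
  have mul_map_mem (t : H ⊗[k] H) : LinearMap.mul' k A (TensorProduct.map f g t) ∈ M * N := by
    induction t with
    | zero => simp
    | tmul x y => simpa using Submodule.mul_mem_mul (hf x) (hg y)
    | add s t hs ht => simpa using add_mem hs ht
  exact mul_map_mem (Coalgebra.comul h)

variable {ξ : PartialModuleAlgebra k H A}

theorem hstable_top : Hstable k ξ ⊤ := fun _ _ _ => Submodule.mem_top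

theorem Hstable.mul {M N : Submodule k A} (hM : Hstable k ξ M) (hN : Hstable k ξ N) :
    Hstable k ξ (M * N) := fun h x hx => by
  induction hx using Submodule.mul_induction_on' with
  | mem_mul_mem a ha b hb =>
    rw [ξ.act_mul]
    exact sweedler_mem_mul (fun g => hM g a ha) (fun g => hN g b hb) h
  | add x _ y _ hx hy => simpa using add_mem hx hy

namespace PartialModuleAlgebra

variable (ξ)

/-- The subspace `H · a = {h · a | h ∈ H}` of `A`, encoded as the range of `h ↦ h · a`. It need not
be `H`-stable, but `twoSidedSpan (ξ.orbit a)` is the `H`-stable ideal generated by `a`. -/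
def orbit (a : A) : Submodule k A :=
  LinearMap.range (ξ.act.flip a)

theorem act_mem_orbit (h : H) (a : A) : ξ.act h a ∈ ξ.orbit a :=
  ⟨h, rfl⟩

theorem mem_orbit_self (a : A) : a ∈ ξ.orbit a :=
  ⟨1, ξ.one_act a⟩

theorem act_act_mem_top_mul_orbit (h g : H) (a : A) : ξ.act h (ξ.act g a) ∈ ⊤ * ξ.orbit a := by
  rw [ξ.act_act]
  exact sweedler_mem_mul (fun _ => Submodule.mem_top) (fun l => ξ.act_mem_orbit (l * g) a) h

theorem hstable_top_mul_orbit (a : A) : Hstable k ξ (⊤ * ξ.orbit a) := fun h x hx => by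
  have top_mul_le : ⊤ * (⊤ * ξ.orbit a) ≤ ⊤ * ξ.orbit a := by
    rw [← mul_assoc]
    exact mul_le_mul_left le_top _
  induction hx using Submodule.mul_induction_on' with
  | mem_mul_mem c _ y hy =>
    obtain ⟨g, rfl⟩ := hy
    rw [ξ.act_mul]
    exact top_mul_le <| sweedler_mem_mul (fun _ => Submodule.mem_top)
      (fun l => ξ.act_act_mem_top_mul_orbit l g a) h
  | add x _ y _ hx hy => simpa using add_mem hx hy

theorem hstable_twoSidedSpan_orbit (a : A) : Hstable k ξ (twoSidedSpan (ξ.orbit a)) :=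
  (ξ.hstable_top_mul_orbit a).mul hstable_top

theorem mem_twoSidedSpan_orbit_self (a : A) : a ∈ twoSidedSpan (ξ.orbit a) :=
  le_twoSidedSpan _ (ξ.mem_orbit_self a)

theorem orbit_mul_top_mul_orbit_le_iff {a b : A} {M : Submodule k A} :
    ξ.orbit a * ⊤ * ξ.orbit b ≤ M ↔ ∀ (h g : H) (c : A), ξ.act h a * c * ξ.act g b ∈ M := by
  refine ⟨fun hle h g c => hle <| Submodule.mul_mem_mul
    (Submodule.mul_mem_mul (ξ.act_mem_orbit h a) Submodule.mem_top) (ξ.act_mem_orbit g b),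
    fun hmem => ?_⟩
  rw [mul_assoc, Submodule.mul_le]
  rintro _ ⟨h, rfl⟩ y hy
  induction hy using Submodule.mul_induction_on' with
  | mem_mul_mem c _ z hz =>
    obtain ⟨g, rfl⟩ := hz
    simpa [mul_assoc] using hmem h g c
  | add x _ y _ hx hy => simpa [mul_add] using add_mem hx hy

theorem twoSidedSpan_orbit_mul_le_iff {p : Submodule k A} (hp : IsIdeal k p) {a b : A} :
    twoSidedSpan (ξ.orbit a) * twoSidedSpan (ξ.orbit b) ≤ p ↔
      ∀ (h g : H) (c : A), ξ.act h a * c * ξ.act g b ∈ p := by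
  rw [twoSidedSpan_mul_twoSidedSpan, twoSidedSpan_le_iff hp, orbit_mul_top_mul_orbit_le_iff]

end PartialModuleAlgebra

end HPrime

/-- Characterization of `H`-prime ideals: a proper `H`-stable ideal `𝔭` is `H`-prime iff
for all `a, b ∈ A`, `(H·a)A(H·b) ⊆ 𝔭` implies `a ∈ 𝔭` or `b ∈ 𝔭`. -/
theorem isHPrime_iff_elementwise (ξ : PartialModuleAlgebra k H A) (p : Submodule k A)
    (hp : IsIdeal k p) (hs : Hstable k ξ p) (hne : p ≠ ⊤) :
    IsHPrime k ξ p ↔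
      ∀ a b : A, (∀ (h g : H) (c : A), ξ.act h a * c * ξ.act g b ∈ p) →
        a ∈ p ∨ b ∈ p := by
  constructor
  · rintro ⟨-, -, -, hprime⟩ a b hab
    have hprod : idealProd k (twoSidedSpan (ξ.orbit a)) (twoSidedSpan (ξ.orbit b)) ≤ p := by
      rw [idealProd_eq_mul]
      exact (ξ.twoSidedSpan_orbit_mul_le_iff hp).2 hab
    exact (hprime _ _ (isIdeal_twoSidedSpan _) (ξ.hstable_twoSidedSpan_orbit a)
      (isIdeal_twoSidedSpan _) (ξ.hstable_twoSidedSpan_orbit b) hprod).imp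
      (fun hle => hle (ξ.mem_twoSidedSpan_orbit_self a))
      (fun hle => hle (ξ.mem_twoSidedSpan_orbit_self b))
  · refine fun helem => ⟨hp, hs, hne, fun I J hI hIs _ hJs hIJ => ?_⟩
    rw [idealProd_eq_mul] at hIJ
    by_contra! hnot
    obtain ⟨a, haI, hap⟩ := SetLike.not_le_iff_exists.1 hnot.1
    obtain ⟨b, hbJ, hbp⟩ := SetLike.not_le_iff_exists.1 hnot.2
    have hab (h g : H) (c : A) : ξ.act h a * c * ξ.act g b ∈ p :=
      hIJ (Submodule.mul_mem_mul (hI _ (hIs h a haI) c).1 (hJs g b hbJ))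
    exact (helem a b hab).elim hap hbp
end
end

section
/- Let A be a partial H-module algebra and I an H-stable ideal. The H-radical √_H(I) := {x ∈ A : every Hm-system containing x meets I} equals the intersection of all H-prime ideals of A containing I. In particular √_H(I) is an H-stable ideal. -/
open TensorProduct

noncomputable section

variable (k : Type*) [Field k]

variable {H A : Type*} [Ring H] [HopfAlgebra k H] [Ring A] [Algebra k A]

/-!
The complement of an `H`-prime ideal is an `Hm`-system, so an element of `√_H(I)` lies in every
`H`-prime ideal containing `I`. Conversely, if an `Hm`-system `M ∋ x` misses `I`, then an `H`-stable
ideal containing `I` and maximal among those that miss `M` is `H`-prime, and it does not contain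
`x`. The link between elements and ideals is that `A(H·x)A` is the `H`-stable ideal generated by
`x`, and that the product of `A(H·x)A` and `A(H·y)A` is `A(H·x)A(H·y)A`.
-/

section

variable {k}

theorem sweedler_mem_range_mul_range (f g : H →ₗ[k] A) (h : H) :
    sweedler k f g h ∈ LinearMap.range f * LinearMap.range g := by
  suffices ∀ t : H ⊗[k] H,
      LinearMap.mul' k A (TensorProduct.map f g t) ∈ LinearMap.range f * LinearMap.range g from
    this (Coalgebra.comul h)
  intro t
  induction t using TensorProduct.induction_on with
  | zero => simp only [map_zero, zero_mem]
  | tmul a b =>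
    rw [TensorProduct.map_tmul, LinearMap.mul'_apply]
    exact Submodule.mul_mem_mul ⟨a, rfl⟩ ⟨b, rfl⟩
  | add s t hs ht => simpa only [map_add] using add_mem hs ht

theorem submodule_top_mul_top {R B : Type*} [CommSemiring R] [Semiring B] [Algebra R B] :
    (⊤ : Submodule R B) * ⊤ = ⊤ :=
  (⊤ : Subalgebra R B).isIdempotentElem_toSubmodule

theorem IsIdeal.mul_le_left {I : Submodule k A} (hI : IsIdeal k I) (J : Submodule k A) :
    I * J ≤ I :=
  (mul_le_mul_right le_top I).trans (isIdeal_iff_mul_top_le_and_top_mul_le.1 hI).1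

theorem IsIdeal.mul_le_right {I : Submodule k A} (hI : IsIdeal k I) (J : Submodule k A) :
    J * I ≤ I :=
  (mul_le_mul_left le_top I).trans (isIdeal_iff_mul_top_le_and_top_mul_le.1 hI).2

theorem IsIdeal.sup_mul_sup_le {p I J : Submodule k A} (hp : IsIdeal k p) (hIJ : I * J ≤ p) :
    (p ⊔ I) * (p ⊔ J) ≤ p := by
  rw [Submodule.sup_mul, Submodule.mul_sup I]
  exact sup_le (hp.mul_le_left _) (sup_le (hp.mul_le_right I) hIJ)

/-- The subspace `H·x`. For a partial action it need not be `H`-stable. -/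
def hOrbit (ξ : PartialModuleAlgebra k H A) (x : A) : Submodule k A :=
  LinearMap.range (ξ.act.flip x)

/-- The ideal `A(H·x)A`, which is the smallest `H`-stable ideal containing `x`. -/
def hIdealSpan (ξ : PartialModuleAlgebra k H A) (x : A) : Submodule k A :=
  ⊤ * hOrbit ξ x * ⊤

/-- `H`-stable ideals, as a single predicate on subspaces. -/
structure IsHstableIdeal (ξ : PartialModuleAlgebra k H A) (I : Submodule k A) : Prop where
  isIdeal : IsIdeal k I
  hstable : Hstable k ξ I

variable {ξ : PartialModuleAlgebra k H A}

theorem mem_hOrbit_self (ξ : PartialModuleAlgebra k H A) (x : A) : x ∈ hOrbit ξ x :=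
  ⟨1, ξ.one_act x⟩

theorem act_mul_mem_hOrbit_mul_hOrbit (ξ : PartialModuleAlgebra k H A) (h : H) (a b : A) :
    ξ.act h (a * b) ∈ hOrbit ξ a * hOrbit ξ b := by
  rw [ξ.act_mul]
  exact sweedler_mem_range_mul_range _ _ h

theorem hOrbit_le_top_mul_hOrbit {x y : A} (hy : y ∈ hOrbit ξ x) :
    hOrbit ξ y ≤ ⊤ * hOrbit ξ x := by
  obtain ⟨g, rfl⟩ := hy
  rintro _ ⟨h, rfl⟩
  change ξ.act h (ξ.act g x) ∈ _
  rw [ξ.act_act]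
  exact mul_le_mul' le_top (LinearMap.range_comp_le_range _ _)
    (sweedler_mem_range_mul_range _ _ h)

theorem Hstable.hOrbit_le {I : Submodule k A} (hI : Hstable k ξ I) {x : A} (hx : x ∈ I) :
    hOrbit ξ x ≤ I := by
  rintro _ ⟨h, rfl⟩
  exact hI h x hx

theorem hstable_mul_of_hOrbit_mul_le {I J : Submodule k A}
    (hIJ : ∀ a ∈ I, ∀ b ∈ J, hOrbit ξ a * hOrbit ξ b ≤ I * J) : Hstable k ξ (I * J) := by
  intro h
  change I * J ≤ (I * J).comap (ξ.act h)
  exact Submodule.mul_le.2 fun a ha b hb => hIJ a ha b hb (act_mul_mem_hOrbit_mul_hOrbit ξ h a b)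

theorem Hstable.mul_s13 {I J : Submodule k A} (hI : Hstable k ξ I) (hJ : Hstable k ξ J) :
    Hstable k ξ (I * J) :=
  hstable_mul_of_hOrbit_mul_le fun _ ha _ hb =>
    mul_le_mul' (hI.hOrbit_le ha) (hJ.hOrbit_le hb)

theorem hstable_top_mul_hOrbit (ξ : PartialModuleAlgebra k H A) (x : A) :
    Hstable k ξ (⊤ * hOrbit ξ x) :=
  hstable_mul_of_hOrbit_mul_le fun a _ b hb =>
    calc hOrbit ξ a * hOrbit ξ b
      _ ≤ ⊤ * (⊤ * hOrbit ξ x) := mul_le_mul' le_top (hOrbit_le_top_mul_hOrbit hb)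
      _ = ⊤ * hOrbit ξ x := by rw [← mul_assoc, submodule_top_mul_top]

theorem hIdealSpan_mul_top (ξ : PartialModuleAlgebra k H A) (x : A) :
    hIdealSpan ξ x * ⊤ = hIdealSpan ξ x := by
  rw [hIdealSpan, mul_assoc, submodule_top_mul_top]

theorem top_mul_hIdealSpan (ξ : PartialModuleAlgebra k H A) (x : A) :
    ⊤ * hIdealSpan ξ x = hIdealSpan ξ x := by
  rw [hIdealSpan, ← mul_assoc, ← mul_assoc, submodule_top_mul_top]

theorem isHstableIdeal_hIdealSpan (ξ : PartialModuleAlgebra k H A) (x : A) :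
    IsHstableIdeal ξ (hIdealSpan ξ x) where
  isIdeal := isIdeal_iff_mul_top_le_and_top_mul_le.2
    ⟨(hIdealSpan_mul_top ξ x).le, (top_mul_hIdealSpan ξ x).le⟩
  hstable := (hstable_top_mul_hOrbit ξ x).mul_s13 hstable_top

theorem mem_hIdealSpan_self (ξ : PartialModuleAlgebra k H A) (x : A) : x ∈ hIdealSpan ξ x := by
  have hx : 1 * x * 1 ∈ hIdealSpan ξ x :=
    Submodule.mul_mem_mul (Submodule.mul_mem_mul trivial (mem_hOrbit_self ξ x)) trivial
  simpa only [one_mul, mul_one] using hx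

theorem IsHstableIdeal.hIdealSpan_le {I : Submodule k A} (hI : IsHstableIdeal ξ I) {x : A}
    (hx : x ∈ I) : hIdealSpan ξ x ≤ I :=
  calc ⊤ * hOrbit ξ x * ⊤
    _ ≤ ⊤ * I * ⊤ := by gcongr; exact hI.hstable.hOrbit_le hx
    _ ≤ I * ⊤ := by gcongr; exact hI.isIdeal.mul_le_right ⊤
    _ ≤ I := hI.isIdeal.mul_le_left ⊤

open scoped Pointwise in
theorem spanAxAy_eq_mul (ξ : PartialModuleAlgebra k H A) (x y : A) :
    spanAxAy k ξ x y = hIdealSpan ξ x * hOrbit ξ y := by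
  calc spanAxAy k ξ x y
    _ = Submodule.span k (Set.univ * (hOrbit ξ x : Set A) * Set.univ * (hOrbit ξ y : Set A)) := by
      rw [spanAxAy]
      congr 1
      ext w
      simp only [Set.mem_ofPred_eq, hOrbit, Set.mem_mul, Set.mem_univ, SetLike.mem_coe,
        LinearMap.mem_range, LinearMap.flip_apply, eq_comm, ↓existsAndEq, true_and]
    _ = hIdealSpan ξ x * hOrbit ξ y := by
      simp only [hIdealSpan, ← Submodule.span_mul_span, Submodule.span_univ, Submodule.span_eq]

theorem hIdealSpan_mul_hIdealSpan (ξ : PartialModuleAlgebra k H A) (x y : A) :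
    hIdealSpan ξ x * hIdealSpan ξ y = spanAxAy k ξ x y * ⊤ :=
  calc hIdealSpan ξ x * (⊤ * hOrbit ξ y * ⊤)
    _ = hIdealSpan ξ x * ⊤ * hOrbit ξ y * ⊤ := by simp only [mul_assoc]
    _ = spanAxAy k ξ x y * ⊤ := by rw [hIdealSpan_mul_top, spanAxAy_eq_mul]

theorem IsHstableIdeal.spanAxAy_le_mul {I J : Submodule k A} (hI : IsHstableIdeal ξ I)
    (hJ : Hstable k ξ J) {x y : A} (hx : x ∈ I) (hy : y ∈ J) : spanAxAy k ξ x y ≤ I * J := by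
  rw [spanAxAy_eq_mul]
  exact mul_le_mul' (hI.hIdealSpan_le hx) (hJ.hOrbit_le hy)

theorem isHstableIdeal_sInf {S : Set (Submodule k A)} (hS : ∀ p ∈ S, IsHstableIdeal ξ p) :
    IsHstableIdeal ξ (sInf S) where
  isIdeal a ha b := by
    simp only [Submodule.mem_sInf] at ha ⊢
    exact ⟨fun p hp => ((hS p hp).isIdeal a (ha p hp) b).1,
      fun p hp => ((hS p hp).isIdeal a (ha p hp) b).2⟩
  hstable h a ha := by
    simp only [Submodule.mem_sInf] at ha ⊢
    exact fun p hp => (hS p hp).hstable h a (ha p hp)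

theorem isHstableIdeal_sSup {S : Set (Submodule k A)} (hS : ∀ p ∈ S, IsHstableIdeal ξ p) :
    IsHstableIdeal ξ (sSup S) := by
  have sSup_le_comap (f : A →ₗ[k] A) (hf : ∀ p ∈ S, p ≤ p.comap f) :
      sSup S ≤ (sSup S).comap f :=
    sSup_le fun p hp => (hf p hp).trans (Submodule.comap_mono (le_sSup hp))
  exact
    { isIdeal := fun a ha b =>
        ⟨sSup_le_comap (LinearMap.mulRight k b) (fun p hp a ha => ((hS p hp).isIdeal a ha b).1) ha,
          sSup_le_comap (LinearMap.mulLeft k b) (fun p hp a ha => ((hS p hp).isIdeal a ha b).2) ha⟩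
      hstable := fun h => sSup_le_comap (ξ.act h) fun p hp => (hS p hp).hstable h }

theorem IsHstableIdeal.sup {I J : Submodule k A} (hI : IsHstableIdeal ξ I)
    (hJ : IsHstableIdeal ξ J) : IsHstableIdeal ξ (I ⊔ J) := by
  rw [← sSup_pair]
  exact isHstableIdeal_sSup fun p hp => by rcases hp with rfl | rfl <;> assumption

theorem IsHPrime.isHstableIdeal {p : Submodule k A} (hp : IsHPrime k ξ p) : IsHstableIdeal ξ p :=
  ⟨hp.1, hp.2.1⟩

theorem IsHPrime.le_or_le_of_mul_le {p I J : Submodule k A} (hp : IsHPrime k ξ p)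
    (hI : IsHstableIdeal ξ I) (hJ : IsHstableIdeal ξ J) (hIJ : I * J ≤ p) : I ≤ p ∨ J ≤ p :=
  hp.2.2.2 I J hI.isIdeal hI.hstable hJ.isIdeal hJ.hstable ((idealProd_eq_mul I J).trans_le hIJ)

theorem IsHPrime.mem_or_mem_of_spanAxAy_le {p : Submodule k A} (hp : IsHPrime k ξ p) {x y : A}
    (hxy : spanAxAy k ξ x y ≤ p) : x ∈ p ∨ y ∈ p := by
  have hle : hIdealSpan ξ x * hIdealSpan ξ y ≤ p := by
    rw [hIdealSpan_mul_hIdealSpan]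
    exact (mul_le_mul_left hxy ⊤).trans (hp.isHstableIdeal.isIdeal.mul_le_left ⊤)
  exact (hp.le_or_le_of_mul_le (isHstableIdeal_hIdealSpan ξ x) (isHstableIdeal_hIdealSpan ξ y)
    hle).imp (· (mem_hIdealSpan_self ξ x)) (· (mem_hIdealSpan_self ξ y))

theorem IsHPrime.hmSystem_compl {p : Submodule k A} (hp : IsHPrime k ξ p) :
    HmSystem k ξ (p : Set A)ᶜ := by
  refine ⟨?_, fun x hx y hy => ?_⟩
  · rw [Set.nonempty_compl, ne_eq, Submodule.coe_eq_univ]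
    exact hp.2.2.1
  · by_contra! hdisj
    have hle : spanAxAy k ξ x y ≤ p := fun z hz => by_contra fun hzp => hdisj z hzp hz
    exact (hp.mem_or_mem_of_spanAxAy_le hle).elim hx hy

theorem HmSystem.not_mul_le {M : Set A} (hM : HmSystem k ξ M) {p I J : Submodule k A}
    (hp : Disjoint M (p : Set A)) (hI : IsHstableIdeal ξ I) (hJ : Hstable k ξ J)
    (hMI : ¬ Disjoint M (I : Set A)) (hMJ : ¬ Disjoint M (J : Set A)) : ¬ I * J ≤ p := by
  intro hIJ
  obtain ⟨x, hxM, hxI⟩ := Set.not_disjoint_iff.1 hMI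
  obtain ⟨y, hyM, hyJ⟩ := Set.not_disjoint_iff.1 hMJ
  obtain ⟨z, hzM, hz⟩ := hM.2 x hxM y hyM
  exact Set.disjoint_left.1 hp hzM (hIJ (hI.spanAxAy_le_mul hJ hxI hyJ hz))

theorem HmSystem.isHPrime_of_maximal {M : Set A} (hM : HmSystem k ξ M) {p : Submodule k A}
    (hp : Maximal (fun q : Submodule k A => IsHstableIdeal ξ q ∧ Disjoint M (q : Set A)) p) :
    IsHPrime k ξ p := by
  obtain ⟨hpideal, hpM⟩ := hp.prop
  refine ⟨hpideal.isIdeal, hpideal.hstable, ?_, fun I J hI hIs hJ hJs hIJ => ?_⟩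
  · rintro rfl
    obtain ⟨x, hx⟩ := hM.1
    exact Set.disjoint_left.1 hpM hx trivial
  · have meets_sup {L : Submodule k A} (hL : IsHstableIdeal ξ L) (hLp : ¬ L ≤ p) :
        ¬ Disjoint M ((p ⊔ L : Submodule k A) : Set A) := fun hdisj =>
      hLp (le_sup_right.trans (hp.le_of_ge ⟨hpideal.sup hL, hdisj⟩ le_sup_left))
    by_contra! hnot
    refine hM.not_mul_le hpM (hpideal.sup ⟨hI, hIs⟩) (hpideal.sup ⟨hJ, hJs⟩).hstable
      (meets_sup ⟨hI, hIs⟩ hnot.1) (meets_sup ⟨hJ, hJs⟩ hnot.2) ?_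
    exact hpideal.isIdeal.sup_mul_sup_le ((idealProd_eq_mul I J).symm.trans_le hIJ)

theorem IsHstableIdeal.exists_le_maximal_disjoint {I : Submodule k A} (hI : IsHstableIdeal ξ I)
    {M : Set A} (hMI : Disjoint M (I : Set A)) :
    ∃ p, I ≤ p ∧
      Maximal (fun q : Submodule k A => IsHstableIdeal ξ q ∧ Disjoint M (q : Set A)) p := by
  refine zorn_le_nonempty₀ {q : Submodule k A | IsHstableIdeal ξ q ∧ Disjoint M (q : Set A)}
    (fun c hc hchain q hq => ?_) I ⟨hI, hMI⟩
  refine ⟨sSup c, ⟨isHstableIdeal_sSup fun p hp => (hc hp).1, ?_⟩, fun _ => le_sSup⟩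
  refine Set.disjoint_left.2 fun x hxM hx => ?_
  obtain ⟨p, hp, hxp⟩ := (Submodule.mem_sSup_of_directed ⟨q, hq⟩ hchain.directedOn).1 hx
  exact Set.disjoint_left.1 (hc hp).2 hxM hxp

theorem HmSystem.exists_isHPrime_disjoint {M : Set A} (hM : HmSystem k ξ M) {I : Submodule k A}
    (hI : IsHstableIdeal ξ I) (hMI : Disjoint M (I : Set A)) :
    ∃ p, IsHPrime k ξ p ∧ I ≤ p ∧ Disjoint M (p : Set A) := by
  obtain ⟨p, hIp, hp⟩ := hI.exists_le_maximal_disjoint hMI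
  exact ⟨p, hM.isHPrime_of_maximal hp, hIp, hp.prop.2⟩

theorem Hradical_subset_of_isHPrime {I p : Submodule k A} (hp : IsHPrime k ξ p) (hIp : I ≤ p) :
    Hradical k ξ I ⊆ p := by
  intro x hx
  by_contra hxp
  obtain ⟨z, hzp, hzI⟩ := hx (p : Set A)ᶜ hp.hmSystem_compl hxp
  exact hzp (hIp hzI)

theorem IsHstableIdeal.mem_Hradical_iff {I : Submodule k A} (hI : IsHstableIdeal ξ I) {x : A} :
    x ∈ Hradical k ξ I ↔ ∀ p : Submodule k A, IsHPrime k ξ p → I ≤ p → x ∈ p := by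
  refine ⟨fun hx p hp hIp => Hradical_subset_of_isHPrime hp hIp hx, fun hx M hM hxM => ?_⟩
  by_contra hMI
  obtain ⟨p, hp, hIp, hMp⟩ := hM.exists_isHPrime_disjoint hI
    (Set.disjoint_iff_inter_eq_empty.2 (Set.not_nonempty_iff_eq_empty.1 hMI))
  exact Set.disjoint_left.1 hMp hxM (hx p hp hIp)

end

/-- The `H`-radical of an `H`-stable ideal `I` is the intersection of all `H`-prime ideals
containing `I`.  In particular `√_H(I)` is an `H`-stable ideal. -/
theorem Hradical_eq_sInter_HPrime (ξ : PartialModuleAlgebra k H A) (I : Submodule k A)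
    (hI : IsIdeal k I) (hs : Hstable k ξ I) :
    Hradical k ξ I =
      {x : A | ∀ p : Submodule k A, IsHPrime k ξ p → I ≤ p → x ∈ p} ∧
    ∃ J : Submodule k A, (J : Set A) = Hradical k ξ I ∧ IsIdeal k J ∧ Hstable k ξ J := by
  have mem_iff (x : A) := IsHstableIdeal.mem_Hradical_iff (x := x) ⟨hI, hs⟩
  have hJ : IsHstableIdeal ξ (sInf {p | IsHPrime k ξ p ∧ I ≤ p}) :=
    isHstableIdeal_sInf fun p hp => hp.1.isHstableIdeal
  refine ⟨Set.ext mem_iff, _, ?_, hJ.isIdeal, hJ.hstable⟩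
  ext x
  simp only [mem_iff, SetLike.mem_coe, Submodule.mem_sInf, Set.mem_ofPred_eq, and_imp]
end
end
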